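/- Let n ≥ 2 be a natural number, k > 0 a real number, and let ε, r₀ be positive real numbers, 1 < b ≤ 2, and let C be a real number with C > ((n+k−1)/ε)·(b−1)·(r₀+ε)^{b−1}. Then there does not exist a function φ : ℝ → ℝ that is differentiable on [ε, ∞) with φ'(t) ≤ −φ(t)²/(n+k−1) − C·(r₀+t)^{−b} for all t ≥ ε, φ(t) ≥ 0 for all t ≥ ε, and φ(ε) ≤ (n+k−1)/ε. -/

import Mathlib

open MeasureTheory Set

/-!
The quadratic term of the Riccati inequality is nonpositive, which leaves
`φ' ≤ -C (r₀ + t)^(-b)`. Integrating over `[ε, ∞)` and using `0 ≤ φ` at infinity gives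
`φ ε ≥ C ∫_ε^∞ (r₀ + t)^(-b) dt = C / ((b - 1) (r₀ + ε)^(b - 1))`,
whereas the assumption on `C` says that the right-hand side exceeds `(n + k - 1) / ε`.
-/

lemma sub_le_integral_Ioi_of_hasDeriv_right_of_le {f f' g : ℝ → ℝ} {a c : ℝ}
    (hcont : ContinuousOn f (Ici a))
    (hderiv : ∀ x ∈ Ioi a, HasDerivWithinAt f (f' x) (Ioi x) x)
    (hg : IntegrableOn g (Ioi a)) (hle : ∀ x ∈ Ioi a, f' x ≤ g x)
    (hc : ∀ᶠ x in Filter.atTop, c ≤ f x) :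
    c - f a ≤ ∫ x in Ioi a, g x := by
  refine ge_of_tendsto (intervalIntegral_tendsto_integral_Ioi a hg Filter.tendsto_id) ?_
  filter_upwards [hc, Filter.eventually_ge_atTop a] with t hct hat
  calc
    c - f a ≤ f t - f a := by gcongr
    _ ≤ ∫ x in a..t, g x :=
      intervalIntegral.sub_le_integral_of_hasDeriv_right_of_le hat
        (hcont.mono Icc_subset_Ici_self) (fun x hx ↦ hderiv x hx.1)
        ((integrableOn_Icc_iff_integrableOn_Ioc).2 (hg.mono_set Ioc_subset_Ioi_self))
        (fun x hx ↦ hle x hx.1)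

lemma integral_Ioi_add_rpow_of_lt {p a r : ℝ} (hp : p < -1) (ha : -r < a) :
    ∫ t in Ioi a, (t + r) ^ p = -(a + r) ^ (p + 1) / (p + 1) := by
  have translate := (measurePreserving_add_right volume r).setIntegral_preimage_emb
    (measurableEmbedding_addRight r) (fun t ↦ t ^ p) (Ioi (a + r))
  rw [preimage_add_const_Ioi, add_sub_cancel_right] at translate
  rw [translate, integral_Ioi_rpow_of_lt hp (neg_lt_iff_pos_add.1 ha)]

theorem stmt_8_general {a r₀ b C m : ℝ} (hb : 1 < b) (ha : 0 < r₀ + a)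
    (hC : m * (b - 1) * (r₀ + a) ^ (b - 1) < C) :
    ¬ ∃ φ φ' : ℝ → ℝ,
      (∀ t ∈ Ici a, HasDerivWithinAt φ (φ' t) (Ici a) t) ∧
      (∀ t, a ≤ t → φ' t ≤ -C * (r₀ + t) ^ (-b)) ∧
      (∀ t, a ≤ t → 0 ≤ φ t) ∧
      φ a ≤ m := by
  rintro ⟨φ, φ', hderiv, hle, hnonneg, hm⟩
  have hp : -b < -1 := neg_lt_neg hb
  have ha' : -r₀ < a := neg_lt_iff_pos_add'.2 ha
  have integrated : 0 - φ a ≤ ∫ t in Ioi a, -C * (t + r₀) ^ (-b) :=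
    sub_le_integral_Ioi_of_hasDeriv_right_of_le
      (fun t ht ↦ (hderiv t ht).continuousWithinAt)
      (fun t ht ↦ (hderiv t (Ioi_subset_Ici_self ht)).mono (Ioi_subset_Ici (le_of_lt ht)))
      ((integrableOn_add_rpow_Ioi_of_lt hp ha').const_mul _)
      (fun t ht ↦ add_comm r₀ t ▸ hle t (le_of_lt ht))
      ((Filter.eventually_ge_atTop a).mono hnonneg)
  have evaluated : ∫ t in Ioi a, -C * (t + r₀) ^ (-b) =
      -(C / ((b - 1) * (r₀ + a) ^ (b - 1))) := by
    rw [integral_const_mul, integral_Ioi_add_rpow_of_lt hp ha', add_comm a r₀,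
      show -b + 1 = -(b - 1) by ring, Real.rpow_neg ha.le]
    field_simp
  have initial_lt : m < C / ((b - 1) * (r₀ + a) ^ (b - 1)) := by
    rw [lt_div_iff₀ (mul_pos (sub_pos.2 hb) (Real.rpow_pos_of_pos ha _)), ← mul_assoc]
    exact hC
  linarith

/-- Analytic core of Corollary 1.12 for `1 < b ≤ 2`: the Riccati inequality with
`h(t) = (r₀+t)^{−b}` and the comparison bounds contradict
`C > ((n+k−1)/ε)·(b−1)·(r₀+ε)^{b−1}`. -/
theorem stmt_8 (n : ℕ) (hn : 2 ≤ n) (k ε r₀ b C : ℝ) (hk : 0 < k) (hε : 0 < ε)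
    (hr₀ : 0 < r₀) (hb1 : 1 < b) (hb2 : b ≤ 2)
    (hC : (((n : ℝ) + k - 1) / ε) * (b - 1) * (r₀ + ε) ^ (b - 1) < C) :
    ¬ ∃ φ φ' : ℝ → ℝ,
      (∀ t ∈ Ici ε, HasDerivWithinAt φ (φ' t) (Ici ε) t) ∧
      (∀ t, ε ≤ t → φ' t ≤ -(φ t) ^ 2 / ((n : ℝ) + k - 1) - C * (r₀ + t) ^ (-b)) ∧
      (∀ t, ε ≤ t → 0 ≤ φ t) ∧
      φ ε ≤ ((n : ℝ) + k - 1) / ε := by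
  rintro ⟨φ, φ', hderiv, hriccati, hnonneg, hm⟩
  have hN : 0 ≤ (n : ℝ) + k - 1 := by linarith [(Nat.ofNat_le_cast (α := ℝ)).2 hn]
  refine stmt_8_general hb1 (add_pos hr₀ hε) hC ⟨φ, φ', hderiv, fun t ht ↦ ?_, hnonneg, hm⟩
  linarith [hriccati t ht, div_nonneg (sq_nonneg (φ t)) hN, neg_div ((n : ℝ) + k - 1) (φ t ^ 2)]
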